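/- Let X and Y be normed real vector spaces, n ∈ ℕ, and let L : X → Y, Q : Y → ℝⁿ, and e : ℝⁿ → X be continuous linear maps. Suppose the composite S = Q ∘ L ∘ e : ℝⁿ → ℝⁿ is a linear isomorphism. Let u ∈ X with f = L u, let v ∈ ℝⁿ and set Pu = e(v), and define the discrete solution ũ = e(S⁻¹(Q f)). Then ũ = Pu + (e ∘ S⁻¹ ∘ Q ∘ L)(u − Pu), and consequently ‖u − ũ‖ ≤ (1 + ‖e ∘ S⁻¹ ∘ Q ∘ L‖) · ‖u − Pu‖, where ‖·‖ on operators denotes the operator norm. -/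

import Mathlib

/-- Abstract collocation error estimate: if `S = Q ∘ L ∘ e` is invertible, then the discrete
solution `ũ = e (S⁻¹ (Q f))` satisfies `ũ = Pu + (e ∘ S⁻¹ ∘ Q ∘ L)(u − Pu)` and
`‖u − ũ‖ ≤ (1 + ‖e ∘ S⁻¹ ∘ Q ∘ L‖) ‖u − Pu‖`, where `Pu = e v`. -/
theorem collocation_error_estimate {X Y : Type*}
    [NormedAddCommGroup X] [NormedSpace ℝ X]
    [NormedAddCommGroup Y] [NormedSpace ℝ Y] (n : ℕ)
    (L : X →L[ℝ] Y) (Q : Y →L[ℝ] (Fin n → ℝ)) (e : (Fin n → ℝ) →L[ℝ] X)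
    (S : (Fin n → ℝ) ≃L[ℝ] (Fin n → ℝ))
    (hS : ∀ v : Fin n → ℝ, S v = Q (L (e v)))
    (u : X) (f : Y) (hf : f = L u) (v : Fin n → ℝ) :
    e (S.symm (Q f)) =
      e v + (e.comp (((S.symm : (Fin n → ℝ) →L[ℝ] (Fin n → ℝ))).comp (Q.comp L)))
        (u - e v) ∧
    ‖u - e (S.symm (Q f))‖ ≤
      (1 + ‖e.comp (((S.symm : (Fin n → ℝ) →L[ℝ] (Fin n → ℝ))).comp (Q.comp L))‖) *
        ‖u - e v‖ := by
  have h1 : e (S.symm (Q f)) =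
      e v + (e.comp (((S.symm : (Fin n → ℝ) →L[ℝ] (Fin n → ℝ))).comp (Q.comp L)))
        (u - e v) := by
    have h2 : S.symm (Q (L (e v))) = v := by
      rw [← hS, ContinuousLinearEquiv.symm_apply_apply]
    simp only [ContinuousLinearMap.comp_apply, ContinuousLinearEquiv.coe_coe, map_sub, h2, hf]
    abel
  refine ⟨h1, ?_⟩
  rw [h1]
  generalize e.comp (((S.symm : (Fin n → ℝ) →L[ℝ] (Fin n → ℝ))).comp (Q.comp L)) = T
  calc ‖u - (e v + T (u - e v))‖ = ‖(u - e v) - T (u - e v)‖ := by rw [sub_sub]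
    _ ≤ ‖u - e v‖ + ‖T (u - e v)‖ := norm_sub_le _ _
    _ ≤ ‖u - e v‖ + ‖T‖ * ‖u - e v‖ := by gcongr; exact T.le_opNorm _
    _ = (1 + ‖T‖) * ‖u - e v‖ := by ring
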